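/- arXiv:2109.07771 — 5 statements merged into one kernel-verified Lean document; each statement's English description precedes it below -/
import Mathlib

section
/- Suppose every update message from peer node j ∈ J with sender timestamp s ∈ ℝ arrives at node i at a physical time at most s + 𝓛_ij and is assigned receive timestamp s + C̄_ij. Suppose node i responds to each user read request with timestamp t ∈ ℝ at a physical time T that is the least element satisfying: T ≥ t + O_i, and T is at least the arrival time of every update message whose receive timestamp is at most t. Then for every read request, T − t ≤ max(O_i, sup_{j ∈ J}(𝓛_ij − C̄_ij)), and hence the unavailability satisfies Ā_i ≤ max(O_i, sup_{j ∈ J}(𝓛_ij − C̄_ij)). (This is the CAL theorem: unavailability is, in the worst case, exactly this bound.) -/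
/-- **The CAL theorem.**
Work in the extended reals `EReal`.  Fix a finite nonempty set `J` of peer nodes of a
node `i`, apparent latency bounds `𝓛 : J → EReal`, inconsistencies `C : J → ℝ` with
`C j ≥ 0`, and a processing offset `O ≥ 0`.  Update messages from peer `j` are an
index type `Msg j` with a sender timestamp, an arrival time, and a receive timestamp,
all in `ℝ`.  Suppose every update message from `j` with sender timestamp `s` arrives
at node `i` at physical time at most `s + 𝓛 j` and is assigned receive timestamp
`s + C j`.  Suppose node `i` responds to each user read request with timestamp `t` at
the least physical time `T` satisfying: `T ≥ t + O`, and `T` is at least the arrival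
time of every update message whose receive timestamp is at most `t`.  Then for every
read request, `T − t ≤ max(O, ⨆ j, (𝓛 j − C j))`, and hence the unavailability — the
supremum over read requests of response time minus request timestamp — satisfies
`Ā ≤ max(O, ⨆ j, (𝓛 j − C j))`. -/
theorem cal_theorem {J : Type*} [Fintype J] [Nonempty J]
    (𝓛 : J → EReal) (C : J → ℝ) (hC : ∀ j, 0 ≤ C j)
    (O : EReal) (hO : 0 ≤ O)
    (Msg : J → Type*)
    (sender arrival recvTs : ∀ j, Msg j → ℝ)
    (harrival : ∀ j m, (arrival j m : EReal) ≤ (sender j m : EReal) + 𝓛 j)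
    (hrecvTs : ∀ j m, recvTs j m = sender j m + C j)
    (Req : Type*) (ts resp : Req → ℝ)
    (hresp : ∀ r : Req, IsLeast
      {T : ℝ | (ts r : EReal) + O ≤ (T : EReal) ∧
        ∀ (j : J) (m : Msg j), recvTs j m ≤ ts r → arrival j m ≤ T}
      (resp r)) :
    (∀ r : Req, (resp r : EReal) - (ts r : EReal) ≤
        max O (⨆ j, 𝓛 j - (C j : EReal))) ∧
    (⨆ r : Req, (resp r : EReal) - (ts r : EReal)) ≤
        max O (⨆ j, 𝓛 j - (C j : EReal)) := by
  have key : ∀ r : Req, (resp r : EReal) - (ts r : EReal) ≤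
      max O (⨆ j, 𝓛 j - (C j : EReal)) := by
    intro r
    have hOB : O ≤ max O (⨆ j, 𝓛 j - (C j : EReal)) := le_max_left _ _
    have hLB : ∀ j, 𝓛 j - (C j : EReal) ≤ max O (⨆ j, 𝓛 j - (C j : EReal)) := fun j =>
      (le_iSup (fun j => 𝓛 j - (C j : EReal)) j).trans (le_max_right _ _)
    generalize max O (⨆ j, 𝓛 j - (C j : EReal)) = B at hOB hLB ⊢
    induction B with
    | bot => exact absurd (hO.trans hOB) (by simp)
    | top => exact le_top
    | coe b =>
      have hmem : resp r ≤ ts r + b := by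
        apply (hresp r).2
        refine ⟨?_, ?_⟩
        · rw [EReal.coe_add]
          exact add_le_add le_rfl hOB
        · intro j m hm
          have h1 : 𝓛 j ≤ ((b + C j : ℝ) : EReal) := by
            have h := hLB j
            generalize 𝓛 j = L at h
            induction L with
            | bot => exact bot_le
            | top => simp at h
            | coe l =>
              have h' : l - C j ≤ b := by exact_mod_cast h
              have h2 : l ≤ b + C j := by linarith
              exact_mod_cast h2
          have h2 : (arrival j m : EReal) ≤ ((sender j m + (b + C j) : ℝ) : EReal) := by
            rw [EReal.coe_add]
            exact (harrival j m).trans (add_le_add le_rfl h1)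
          have h3 : arrival j m ≤ sender j m + (b + C j) := by exact_mod_cast h2
          have h4 := hrecvTs j m
          linarith
      have h5 : resp r - ts r ≤ b := by linarith
      exact_mod_cast h5
  exact ⟨key, iSup_le key⟩
end

section
/- Let N be a finite type, Γ : N → N → EReal, and Z : N → EReal. Suppose O : N → EReal satisfies the max-plus fixed-point equation O_i = max(Z_i, sup_{j ∈ N}(Γ_{ij} + O_j)) for all i ∈ N, and suppose there is a cycle i_0, i_1, …, i_m = i_0 (m ≥ 1) whose edge weights Γ_{i_{k+1} i_k} are all finite reals with positive total weight Σ_{k=0}^{m−1} Γ_{i_{k+1} i_k} > 0. Then O_{i_0} ∈ {−∞, +∞}; and if moreover Z_{i_0} > −∞, then O_{i_0} = +∞. In particular, if Z_i ≥ 0 for all nodes on a positive-weight cycle, every solution assigns those nodes infinite processing offsets: with zero inconsistency on a positive-weight cycle, every node must wait forever. -/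
/-- **Positive-weight cycles force infinite processing offsets.**
Work in the extended reals `EReal` with max-plus conventions (`−∞` absorbing for
addition).  Let `N` be finite, `Γ : N → N → EReal`, `Z : N → EReal`, and suppose
`O : N → EReal` satisfies the max-plus fixed-point equation
`O i = max (Z i) (⨆ j, Γ i j + O j)` for all `i`.  Suppose there is a cycle
`c 0, c 1, …, c m = c 0` (`m ≥ 1`) whose edge weights `Γ (c (k+1)) (c k)` are all
finite reals `γ k`, with positive total weight `∑_{k<m} γ k > 0`.  Then
`O (c 0) ∈ {−∞, +∞}`; and if moreover `Z (c 0) > −∞`, then `O (c 0) = +∞`. -/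
theorem positive_cycle_infinite_offset {N : Type*} [Fintype N]
    (Γ : N → N → EReal) (Z O : N → EReal)
    (hO : ∀ i, O i = max (Z i) (⨆ j, Γ i j + O j))
    (m : ℕ) (hm : 1 ≤ m) (c : ℕ → N) (hcycle : c m = c 0)
    (γ : ℕ → ℝ) (hγ : ∀ k < m, Γ (c (k + 1)) (c k) = (γ k : EReal))
    (hpos : 0 < ∑ k ∈ Finset.range m, γ k) :
    (O (c 0) = ⊥ ∨ O (c 0) = ⊤) ∧ (⊥ < Z (c 0) → O (c 0) = ⊤) := by
  have key : ∀ k ≤ m, ((∑ l ∈ Finset.range k, γ l : ℝ) : EReal) + O (c 0) ≤ O (c k) := by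
    intro k
    induction k with
    | zero => intro _; simp
    | succ k ih =>
      intro hk
      have h1 := ih (by omega)
      have h2 : Γ (c (k + 1)) (c k) + O (c k) ≤ O (c (k + 1)) := by
        rw [hO (c (k + 1))]
        exact le_max_of_le_right (le_iSup (fun j => Γ (c (k + 1)) j + O j) (c k))
      rw [hγ k (by omega)] at h2
      refine le_trans ?_ h2
      rw [Finset.sum_range_succ, add_comm (∑ l ∈ Finset.range k, γ l), EReal.coe_add, add_assoc]
      exact add_le_add le_rfl h1
  have main : O (c 0) = ⊥ ∨ O (c 0) = ⊤ := by
    have h := key m le_rfl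
    rw [hcycle] at h
    generalize O (c 0) = x at h
    induction x with
    | bot => exact Or.inl rfl
    | top => exact Or.inr rfl
    | coe r =>
      exfalso
      rw [← EReal.coe_add, EReal.coe_le_coe_iff] at h
      linarith
  refine ⟨main, fun hZ => main.resolve_left fun hb => ?_⟩
  have h3 : Z (c 0) ≤ O (c 0) := by
    rw [hO (c 0)]
    exact le_max_left _ _
  rw [hb] at h3
  exact absurd hZ (not_lt.mpr h3)
end

section
/- Let N be a finite type and Γ : N → N → ℝ ∪ {−∞} a matrix such that every cycle has weight strictly less than 0 (for every sequence i_0, i_1, …, i_m = i_0 with m ≥ 1, Σ_{k=0}^{m−1} Γ_{i_{k+1} i_k} < 0, where a sum involving −∞ is −∞). Then for every b : N → ℝ ∪ {−∞}, the max-plus equation x_i = max(b_i, sup_{j ∈ N}(Γ_{ij} + x_j)) (for all i ∈ N) has exactly one solution x : N → ℝ ∪ {−∞}. -/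
/-- The max-plus affine operator `x ↦ b ⊕ Γ x`. -/
noncomputable def mpF {N : Type*} [Fintype N] (Γ : N → N → WithBot ℝ) (b : N → WithBot ℝ)
    (x : N → WithBot ℝ) : N → WithBot ℝ :=
  fun i => max (b i) (Finset.univ.sup fun j => Γ i j + x j)

theorem mpF_mono {N : Type*} [Fintype N] (Γ : N → N → WithBot ℝ) (b : N → WithBot ℝ) :
    Monotone (mpF Γ b) := by
  intro x y h i
  exact max_le_max le_rfl (Finset.sup_mono_fun fun j _ => add_le_add le_rfl (h j))

theorem mpF_step {N : Type*} [Fintype N] (Γ : N → N → WithBot ℝ) (b : N → WithBot ℝ)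
    (z w : N → WithBot ℝ) (i : N) (h : mpF Γ b w i < mpF Γ b z i) :
    ∃ j, mpF Γ b z i = Γ i j + z j ∧ w j < z j := by
  have hb : b i < mpF Γ b z i := lt_of_le_of_lt (le_max_left _ _) h
  have he : mpF Γ b z i = Finset.univ.sup fun j => Γ i j + z j := by
    rcases max_choice (b i) (Finset.univ.sup fun j => Γ i j + z j) with h1 | h1
    · exact absurd h1.symm hb.ne
    · exact h1
  have hne : (Finset.univ : Finset N).Nonempty := ⟨i, Finset.mem_univ i⟩
  obtain ⟨j, -, hj⟩ := Finset.exists_mem_eq_sup Finset.univ hne (fun j => Γ i j + z j)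
  refine ⟨j, he.trans hj, ?_⟩
  by_contra hc
  push Not at hc
  have h2 : Γ i j + w j ≤ mpF Γ b w i :=
    le_trans (Finset.le_sup (f := fun j => Γ i j + w j) (Finset.mem_univ j)) (le_max_right _ _)
  have h3 : Γ i j + z j ≤ Γ i j + w j := add_le_add le_rfl hc
  rw [he.trans hj] at h
  exact absurd (h3.trans h2) (not_le.mpr h)

theorem mpF_trace {N : Type*} [Fintype N] (Γ : N → N → WithBot ℝ) (b : N → WithBot ℝ)
    (z w : N → WithBot ℝ) (n : ℕ) : ∀ i : N, (mpF Γ b)^[n] w i < (mpF Γ b)^[n] z i →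
    ∃ c : ℕ → N, c n = i ∧ (∀ k ≤ n, (mpF Γ b)^[k] z (c k) ≠ ⊥) ∧
      ∀ k < n, (mpF Γ b)^[k+1] z (c (k+1)) = Γ (c (k+1)) (c k) + (mpF Γ b)^[k] z (c k) := by
  induction n with
  | zero =>
    intro i h
    refine ⟨fun _ => i, rfl, ?_, by simp⟩
    intro k hk
    obtain rfl : k = 0 := by omega
    exact (lt_of_le_of_lt bot_le h).ne'
  | succ n ih =>
    intro i h
    have h' := h
    rw [Function.iterate_succ_apply', Function.iterate_succ_apply'] at h'
    obtain ⟨j, hj, hlt⟩ := mpF_step Γ b _ _ i h'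
    obtain ⟨c, hc, hbot, hs⟩ := ih j hlt
    refine ⟨fun k => if k ≤ n then c k else i, by simp, ?_, ?_⟩
    · intro k hk
      by_cases hkn : k ≤ n
      · simpa [hkn] using hbot k hkn
      · obtain rfl : k = n + 1 := by omega
        simpa using (lt_of_le_of_lt bot_le h).ne'
    · intro k hk
      by_cases hkn : k < n
      · have h1 : k + 1 ≤ n := hkn
        have h2 : k ≤ n := by omega
        simpa only [h1, h2, if_true] using hs k hkn
      · obtain rfl : k = n := by omega
        have h1 : ¬ (k + 1 ≤ k) := by omega
        simp only [h1, le_refl, if_true, if_false, hc]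
        rw [Function.iterate_succ_apply']
        exact hj

theorem mpF_le {N : Type*} [Fintype N] (Γ : N → N → WithBot ℝ)
    (hcyc : ∀ (m : ℕ), 1 ≤ m → ∀ c : ℕ → N, c m = c 0 →
      (∑ k ∈ Finset.range m, Γ (c (k + 1)) (c k)) < 0)
    (b : N → WithBot ℝ) (z w : N → WithBot ℝ) (hz : z ≤ mpF Γ b z) :
    (mpF Γ b)^[Fintype.card N] z ≤ (mpF Γ b)^[Fintype.card N] w := by
  intro i
  by_contra hlt
  push Not at hlt
  obtain ⟨c, -, hbot, hs⟩ := mpF_trace Γ b z w _ i hlt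
  have hsum : ∀ m p, p + m ≤ Fintype.card N → (mpF Γ b)^[p+m] z (c (p+m)) =
      (∑ k ∈ Finset.range m, Γ (c (p + (k + 1))) (c (p + k))) + (mpF Γ b)^[p] z (c p) := by
    intro m p
    induction m with
    | zero => intro _; simp
    | succ m ih =>
      intro hm
      rw [Finset.sum_range_succ, ← add_assoc p m 1, hs (p + m) (by omega), ih (by omega)]
      abel
  have key : ∀ p q : ℕ, p < q → q ≤ Fintype.card N → c p ≠ c q := by
    intro p q hpq hq hc
    obtain ⟨m, rfl⟩ := Nat.exists_eq_add_of_lt hpq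
    have h1 := hsum (m + 1) p hq
    have h2 := hcyc (m + 1) (by omega) (fun k => c (p + k)) hc.symm
    have hmono : (mpF Γ b)^[p] z ≤ (mpF Γ b)^[p + (m + 1)] z :=
      (mpF_mono Γ b).monotone_iterate_of_le_map hz (by omega)
    have h3 := hmono (c p)
    have hb := hbot p (by omega)
    rw [show c (p + (m + 1)) = c p from hc.symm] at h1
    rw [h1] at h3
    generalize (∑ k ∈ Finset.range (m + 1), Γ (c (p + (k + 1))) (c (p + k))) = W at h2 h3
    generalize (mpF Γ b)^[p] z (c p) = t at h3 hb
    have h4 := WithBot.add_lt_add_right hb h2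
    rw [zero_add] at h4
    exact absurd h3 (not_le.mpr h4)
  have hinj : Function.Injective (fun k : Fin (Fintype.card N + 1) => c k) := by
    intro p q hpq
    rcases lt_trichotomy p q with h | h | h
    · exact absurd hpq (key p q h (by omega))
    · exact h
    · exact absurd hpq.symm (key q p h (by omega))
  have := Fintype.card_le_of_injective _ hinj
  simp at this

/-- **Unique solution of `x = b ⊕ Γ x` when all cycle weights are negative.**
Work in the max-plus algebra over `ℝ ∪ {−∞}` (= `WithBot ℝ`): `⊕` is the binary
maximum, `⊗` is ordinary addition with `−∞` absorbing.  Let `N` be a finite type and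
`Γ : N → N → WithBot ℝ` a matrix such that every cycle has weight strictly less than
`0`: for every sequence `i_0, i_1, …, i_m = i_0` with `m ≥ 1`, the weight
`∑_{k<m} Γ (i_{k+1}) (i_k)` is `< 0`.  Then for every `b : N → WithBot ℝ`, the
max-plus equation `x i = max (b i) (⨆ j, Γ i j + x j)` (for all `i`) has exactly one
solution `x : N → WithBot ℝ`. -/
theorem maxplus_unique_solution {N : Type*} [Fintype N]
    (Γ : N → N → WithBot ℝ)
    (hcyc : ∀ (m : ℕ), 1 ≤ m → ∀ c : ℕ → N, c m = c 0 →
      (∑ k ∈ Finset.range m, Γ (c (k + 1)) (c k)) < 0)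
    (b : N → WithBot ℝ) :
    ∃! x : N → WithBot ℝ,
      ∀ i, x i = max (b i) (Finset.univ.sup fun j => Γ i j + x j) := by
  have hbot : (⊥ : N → WithBot ℝ) ≤ mpF Γ b ⊥ := bot_le
  refine ⟨(mpF Γ b)^[Fintype.card N] ⊥, ?_, ?_⟩
  · intro i
    have h1 := mpF_le Γ hcyc b (mpF Γ b ⊥) ⊥ (mpF_mono Γ b hbot)
    have h2 : (mpF Γ b)^[Fintype.card N] ⊥ ≤ (mpF Γ b)^[Fintype.card N] (mpF Γ b ⊥) :=
      (mpF_mono Γ b).iterate _ hbot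
    have h3 := le_antisymm h2 h1
    rw [← Function.iterate_succ_apply, Function.iterate_succ_apply'] at h3
    exact congrFun h3 i
  · intro y hy
    have hfix : Function.IsFixedPt (mpF Γ b) y := (funext hy).symm
    have hit := (hfix.iterate (Fintype.card N)).eq
    refine le_antisymm ?_ ?_
    · have := mpF_le Γ hcyc b y ⊥ hfix.eq.ge
      rwa [hit] at this
    · have := mpF_le Γ hcyc b ⊥ y hbot
      rwa [hit] at this
end

section
/- Let N be a finite type of cardinality n ≥ 1 and Γ : N → N → ℝ ∪ {−∞} a matrix such that every cycle has weight at most 0. For b : N → ℝ ∪ {−∞}, define x_i = max(b_i, sup over all paths p from some j to i of (weight(p) + b_j)), where the supremum over paths is attained (or equivalently may be restricted to paths of length at most n − 1). Then x satisfies the max-plus equation x_i = max(b_i, sup_{j ∈ N}(Γ_{ij} + x_j)) for all i ∈ N; that is, x = Γ* ⊗ b is a solution of x = b ⊕ Γ x whenever all cycle weights are nonpositive. -/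
/-- **`x = Γ* ⊗ b` solves `x = b ⊕ Γ x` when all cycle weights are nonpositive.**
Work in the max-plus algebra over `ℝ ∪ {−∞}` (= `WithBot ℝ`): `⊕` is the binary
maximum, `⊗` is ordinary addition with `−∞` absorbing.  Let `N` be a finite type of
cardinality `n ≥ 1` and `Γ : N → N → WithBot ℝ` a matrix such that every cycle has
weight at most `0`.  For `b : N → WithBot ℝ`, let `x i` be the maximum of `b i` and
the weights `weight(p) + b j` over all paths `p` from some `j` to `i` of length at
most `n − 1` (over which the supremum over all paths is attained); i.e. `x i` is the
greatest element of the set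
`{b i} ∪ {weight(p) + b (start p) | p a path to i of length 1 ≤ m ≤ n − 1}`.
Then `x` satisfies `x i = max (b i) (⨆ j, Γ i j + x j)` for all `i`:
`x = Γ* ⊗ b` is a solution of `x = b ⊕ Γ x`. -/
theorem maxplus_star_solves {N : Type*} [Fintype N]
    (n : ℕ) (hn : n = Fintype.card N) (hn1 : 1 ≤ n)
    (Γ : N → N → WithBot ℝ)
    (hcyc : ∀ (m : ℕ), 1 ≤ m → ∀ c : ℕ → N, c m = c 0 →
      (∑ k ∈ Finset.range m, Γ (c (k + 1)) (c k)) ≤ 0)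
    (b : N → WithBot ℝ) (x : N → WithBot ℝ)
    (hx : ∀ i, IsGreatest
      {w : WithBot ℝ | w = b i ∨
        ∃ m : ℕ, 1 ≤ m ∧ m ≤ n - 1 ∧ ∃ c : ℕ → N, c m = i ∧
          w = (∑ k ∈ Finset.range m, Γ (c (k + 1)) (c k)) + b (c 0)}
      (x i)) :
    ∀ i, x i = max (b i) (Finset.univ.sup fun j => Γ i j + x j) := by
  have key : ∀ m : ℕ, ∀ c : ℕ → N,
      (∑ k ∈ Finset.range m, Γ (c (k + 1)) (c k)) + b (c 0) ≤ x (c m) := by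
    intro m
    induction m using Nat.strong_induction_on with
    | _ m ih =>
      intro c
      by_cases h0 : m = 0
      · subst h0
        simpa using (hx (c 0)).2 (Or.inl rfl)
      by_cases h1 : m ≤ n - 1
      · exact (hx (c m)).2 (Or.inr ⟨m, by omega, h1, c, rfl, rfl⟩)
      obtain ⟨p, d, r, hd, hm, hc⟩ : ∃ p d r, 1 ≤ d ∧ m = p + d + r ∧ c (p + d) = c p := by
        have hcard : Fintype.card N < Fintype.card (Fin (m + 1)) := by
          rw [Fintype.card_fin]; omega
        obtain ⟨u, v, huv, he⟩ :=
          Fintype.exists_ne_map_eq_of_card_lt (fun k : Fin (m + 1) => c k) hcard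
        have huv' : (u : ℕ) ≠ v := fun h => huv (Fin.ext h)
        have hu := u.2
        have hv := v.2
        rcases lt_or_gt_of_ne huv' with h | h
        · refine ⟨u, v - u, m - v, by omega, by omega, ?_⟩
          rw [he]; congr 1; omega
        · refine ⟨v, u - v, m - u, by omega, by omega, ?_⟩
          rw [← he]; congr 1; omega
      subst hm
      have hcy := hcyc d hd (fun k => c (p + k)) (by simpa using hc)
      let c' : ℕ → N := fun k => if k ≤ p then c k else c (k + d)
      have c1 : ∀ k, k ≤ p → c' k = c k := fun k hk => by simp [c', hk]
      have c2 : ∀ k, c' (p + k) = c (p + d + k) := by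
        intro k
        rcases Nat.eq_zero_or_pos k with rfl | hk
        · simp [c', hc]
        · have : ¬ (p + k ≤ p) := by omega
          simp only [c', this, if_false]
          congr 1; omega
      have h := ih (p + r) (by omega) c'
      rw [c2, c1 0 (Nat.zero_le _)] at h
      refine le_trans ?_ h
      gcongr
      rw [Finset.sum_range_add, Finset.sum_range_add, Finset.sum_range_add]
      have e1 : ∑ k ∈ Finset.range p, Γ (c' (k + 1)) (c' k)
          = ∑ k ∈ Finset.range p, Γ (c (k + 1)) (c k) := by
        refine Finset.sum_congr rfl fun k hk => ?_
        have := Finset.mem_range.1 hk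
        rw [c1 _ (by omega), c1 _ (by omega)]
      have e2 : ∑ k ∈ Finset.range r, Γ (c' (p + k + 1)) (c' (p + k))
          = ∑ k ∈ Finset.range r, Γ (c (p + d + k + 1)) (c (p + d + k)) := by
        refine Finset.sum_congr rfl fun k hk => ?_
        rw [add_assoc p k 1, c2, c2]; rfl
      rw [e1, e2]
      gcongr
      calc _ ≤ ∑ k ∈ Finset.range p, Γ (c (k + 1)) (c k) + 0 := by
            gcongr
            exact hcy
        _ = _ := add_zero _
  intro i
  apply le_antisymm
  · rcases (hx i).1 with h | ⟨m, hm1, hm2, c, hci, h⟩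
    · rw [h]; exact le_max_left _ _
    · obtain ⟨m, rfl⟩ : ∃ m', m = m' + 1 := ⟨m - 1, by omega⟩
      refine le_trans ?_ (le_max_right _ _)
      refine le_trans ?_ (Finset.le_sup (f := fun j => Γ i j + x j) (Finset.mem_univ (c m)))
      rw [h, Finset.sum_range_succ, hci, add_comm (Finset.sum _ _), add_assoc]
      have := key m c
      gcongr
  · refine max_le ((hx i).2 (Or.inl rfl)) (Finset.sup_le fun j _ => ?_)
    rcases (hx j).1 with h | ⟨m, hm1, hm2, c, hci, h⟩
    · have := key 1 (fun k => if k = 0 then j else i)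
      simpa [h] using this
    · have hk := key (m + 1) (fun k => if k ≤ m then c k else i)
      rw [Finset.sum_range_succ] at hk
      have e : ∑ k ∈ Finset.range m, Γ (if k + 1 ≤ m then c (k + 1) else i)
          (if k ≤ m then c k else i) = ∑ k ∈ Finset.range m, Γ (c (k + 1)) (c k) := by
        refine Finset.sum_congr rfl fun k hk => ?_
        have := Finset.mem_range.1 hk
        rw [if_pos (by omega), if_pos (by omega)]
      simp only [e] at hk
      rw [if_neg (by omega), if_pos le_rfl, if_pos (Nat.zero_le _), hci,
        add_comm (Finset.sum _ _), add_assoc, ← h] at hk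
      exact hk
end

section
/- Let N be a finite type of cardinality n ≥ 1 and Γ : N → N → ℝ ∪ {−∞} a matrix such that every cycle has weight at most 0. Then for all i, j ∈ N, the supremum over ALL paths from j to i of the path weight equals the maximum over paths from j to i of length at most n − 1 of the path weight (both being −∞ if no path exists). Equivalently, the Kleene star Γ* = I ⊕ Γ ⊕ Γ² ⊕ ⋯ reduces to the finite sum Γ* = I ⊕ Γ ⊕ ⋯ ⊕ Γ^{n−1} in the max-plus algebra. -/
theorem shorten_path {N : Type*} [Fintype N]
    (Γ : N → N → WithBot ℝ)
    (hcyc : ∀ (m : ℕ), 1 ≤ m → ∀ c : ℕ → N, c m = c 0 →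
      (∑ k ∈ Finset.range m, Γ (c (k + 1)) (c k)) ≤ 0) (i j : N) (m : ℕ) :
    ∀ c : ℕ → N, c 0 = j → c m = i → ∃ m' : ℕ, m' ≤ Fintype.card N - 1 ∧ ∃ c' : ℕ → N,
      c' 0 = j ∧ c' m' = i ∧ (∑ k ∈ Finset.range m, Γ (c (k + 1)) (c k)) ≤
        ∑ k ∈ Finset.range m', Γ (c' (k + 1)) (c' k) := by
  induction m using Nat.strong_induction_on with
  | _ m ih =>
  intro c h0 hm
  by_cases hle : m ≤ Fintype.card N - 1
  · exact ⟨m, hle, c, h0, hm, le_rfl⟩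
  have hinj : ∃ a b : ℕ, a < b ∧ b ≤ m ∧ c a = c b := by
    obtain ⟨x, y, hxy, h⟩ := Fintype.exists_ne_map_eq_of_card_lt
      (fun k : Fin (m + 1) => c k) (by simp; omega)
    have hne : (x : ℕ) ≠ y := fun h => hxy (Fin.ext h)
    rcases lt_or_gt_of_ne hne with h1 | h1
    · exact ⟨x, y, h1, by omega, h⟩
    · exact ⟨y, x, h1, by omega, h.symm⟩
  obtain ⟨a, b, hab, hbm, hc⟩ := hinj
  obtain ⟨d, rfl⟩ := Nat.exists_eq_add_of_lt hab
  obtain ⟨e, rfl⟩ := Nat.exists_eq_add_of_le hbm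
  let c' : ℕ → N := fun k => if k ≤ a then c k else c (k + (d + 1))
  have hlow : ∀ k, k ≤ a → c' k = c k := fun k hk => if_pos hk
  have hhigh : ∀ k, c' (a + k) = c (a + d + 1 + k) := by
    intro k
    rcases Nat.eq_zero_or_pos k with rfl | hk
    · rw [hlow _ (by omega)]; exact hc
    · have : ¬ (a + k ≤ a) := by omega
      simp only [c', if_neg this]
      congr 1; omega
  obtain ⟨m', hm', c'', h1, h2, h3⟩ := ih (a + e) (by omega) c'
    (by rw [hlow _ (Nat.zero_le _), h0]) (by rw [hhigh, hm])
  refine ⟨m', hm', c'', h1, h2, le_trans ?_ h3⟩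
  have hcy := hcyc (d + 1) (by omega) (fun k => c (a + k)) hc.symm
  rw [Finset.sum_range_add, add_assoc a d 1, Finset.sum_range_add, Finset.sum_range_add _ a e]
  have e1 : ∑ k ∈ Finset.range a, Γ (c' (k + 1)) (c' k)
      = ∑ k ∈ Finset.range a, Γ (c (k + 1)) (c k) := by
    refine Finset.sum_congr rfl fun k hk => ?_
    have := Finset.mem_range.1 hk
    rw [hlow _ (by omega), hlow _ (by omega)]
  have e2 : ∑ k ∈ Finset.range e, Γ (c' (a + k + 1)) (c' (a + k))
      = ∑ k ∈ Finset.range e, Γ (c (a + (d + 1) + k + 1)) (c (a + (d + 1) + k)) := by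
    refine Finset.sum_congr rfl fun k hk => ?_
    rw [add_assoc a k 1, hhigh, hhigh]
    rfl
  rw [e1, e2]
  refine add_le_add_left ?_ _
  calc _ ≤ _ + 0 := add_le_add_right hcy _
    _ = _ := add_zero _

/-- **The Kleene star `Γ* = I ⊕ Γ ⊕ Γ² ⊕ ⋯` reduces to `I ⊕ Γ ⊕ ⋯ ⊕ Γ^{n−1}`.**
Work in the max-plus algebra over `ℝ ∪ {−∞}` (= `WithBot ℝ`): `⊕` is the binary
maximum, `⊗` is ordinary addition with `−∞` absorbing.  Let `N` be a finite type of
cardinality `n ≥ 1` and `Γ : N → N → WithBot ℝ` a matrix such that every cycle has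
weight at most `0`.  Paths from `j` to `i` are sequences `j = c 0, c 1, …, c m = i`
with weight `∑_{k<m} Γ (c (k+1)) (c k)` and length `m`; the length-`0` path from `j`
to `j` has weight `0`, accounting for the summand `I` of `Γ*` (the `0` added on the
diagonal).  Then for all `i, j`, the supremum over ALL paths from `j` to `i` of the
path weight equals the maximum — attained — over paths from `j` to `i` of length at
most `n − 1` (both being `−∞` if no path exists): there is a `v` that is the least
upper bound of all path weights and the greatest element of the set of weights of
paths of length at most `n − 1`. -/
theorem maxplus_kleene_star_finite {N : Type*} [Fintype N]
    (n : ℕ) (hn : n = Fintype.card N) (hn1 : 1 ≤ n)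
    (Γ : N → N → WithBot ℝ)
    (hcyc : ∀ (m : ℕ), 1 ≤ m → ∀ c : ℕ → N, c m = c 0 →
      (∑ k ∈ Finset.range m, Γ (c (k + 1)) (c k)) ≤ 0) :
    ∀ i j : N, ∃ v : WithBot ℝ,
      IsLUB {w : WithBot ℝ | ∃ (m : ℕ) (c : ℕ → N), c 0 = j ∧ c m = i ∧
          w = ∑ k ∈ Finset.range m, Γ (c (k + 1)) (c k)} v ∧
      IsGreatest {w : WithBot ℝ | ∃ m : ℕ, m ≤ n - 1 ∧ ∃ c : ℕ → N, c 0 = j ∧ c m = i ∧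
          w = ∑ k ∈ Finset.range m, Γ (c (k + 1)) (c k)} v := by
  intro i j
  subst hn
  have key := shorten_path Γ hcyc i j
  set S := {w : WithBot ℝ | ∃ m : ℕ, m ≤ Fintype.card N - 1 ∧ ∃ c : ℕ → N, c 0 = j ∧ c m = i ∧
          w = ∑ k ∈ Finset.range m, Γ (c (k + 1)) (c k)} with hS
  have hfin : S.Finite := by
    refine (Set.finite_range (fun p : Fin (Fintype.card N) × (Fin (Fintype.card N) → N) =>
      ∑ k ∈ Finset.range p.1, Γ (p.2 ⟨min (k + 1) (Fintype.card N - 1), by omega⟩)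
        (p.2 ⟨min k (Fintype.card N - 1), by omega⟩))).subset ?_
    rintro w ⟨m, hm, c, -, -, rfl⟩
    refine ⟨(⟨m, by omega⟩, fun k => c k), ?_⟩
    refine Finset.sum_congr rfl fun k hk => ?_
    have := Finset.mem_range.1 hk
    simp only at this ⊢
    rw [min_eq_left (by omega), min_eq_left (by omega)]
  have hne : S.Nonempty := by
    obtain ⟨m, hm, c, h1, h2, -⟩ := key 1 (fun k => Nat.casesOn k j (fun _ => i)) rfl rfl
    exact ⟨_, m, hm, c, h1, h2, rfl⟩
  obtain ⟨v, hv, hmax⟩ := Set.exists_max_image S id hfin hne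
  refine ⟨v, ⟨?_, ?_⟩, hv, fun w hw => hmax w hw⟩
  · rintro w ⟨m, c, h1, h2, rfl⟩
    obtain ⟨m', hm', c', h1', h2', hle⟩ := key m c h1 h2
    exact hle.trans (hmax _ ⟨m', hm', c', h1', h2', rfl⟩)
  · intro u hu
    obtain ⟨m, hm, c, h1, h2, h3⟩ := hv
    exact hu ⟨m, c, h1, h2, h3⟩
end
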